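/- arXiv:1601.04224 — 3 statements merged into one kernel-verified Lean document; each statement's English description precedes it below -/
import Mathlib

section
/- The effective domain of Λ* is exactly the open disk B_R: for y ∈ ℝ², Λ*(y) < ∞ if and only if ‖y‖ < R. -/
open MeasureTheory Set Filter Topology
open scoped ENNReal RealInnerProductSpace

noncomputable section

/-- The Euclidean plane. -/
abbrev E2 := EuclideanSpace ℝ (Fin 2)

/-- The uniform probability measure on a set `A` (normalized Lebesgue measure). -/
def uniformOn {α : Type*} [MeasureSpace α] (A : Set α) : Measure α :=
  (volume A)⁻¹ • volume.restrict A

/-- The logarithmic moment generating function `Λ` of the uniform probability measure on the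
open disk of radius `R` centered at the origin. -/
def logMGF (R : ℝ) (η : E2) : ℝ :=
  Real.log (∫ x, Real.exp (⟪x, η⟫) ∂(uniformOn (Metric.ball (0 : E2) R)))

/-- The Fenchel–Legendre transform `Λ*` of `logMGF R`, valued in `[0,∞]`.  Since the supremum
includes `η = 0` (where the value is `0`), truncating negative values does not change it. -/
def lambdaStar (R : ℝ) (y : E2) : ℝ≥0∞ :=
  ⨆ η : E2, ENNReal.ofReal (⟪y, η⟫ - logMGF R η)

/-! The rate function is finite at the barycenter `b` of every set `A` of positive measure: Jensen's
inequality on `A` gives `Λ(η) ≥ log μ(A) + ⟪b, η⟫`, so `Λ*(b) ≤ -log μ(A)`, and an interior point of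
the domain is the barycenter of a small ball around it. A point `y` outside an open convex domain is
strictly separated from it by some `η`, so `∫ exp (t ⟪x - y, η⟫) μ(dx) → 0` as `t → ∞`, that is,
`⟪y, t η⟫ - Λ(t η) → ∞`. -/

section

open ProbabilityTheory

section CumulantGeneratingFunction

variable {Ω : Type*} [MeasurableSpace Ω] {μ : Measure Ω} {X : Ω → ℝ}

lemma cgf_sub_const {t : ℝ} (hμ : μ ≠ 0) (hexp : Integrable (fun ω => Real.exp (t * X ω)) μ)
    (c : ℝ) : cgf (fun ω => X ω - c) μ t = cgf X μ t - t * c := by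
  simp only [cgf, sub_eq_add_neg, mgf_add_const]
  rw [Real.log_mul (mgf_pos' hμ hexp).ne' (Real.exp_ne_zero _), Real.log_exp, mul_neg]

variable [IsFiniteMeasure μ]

lemma tendsto_mgf_atTop_of_ae_neg (hX : AEMeasurable X μ) (hneg : ∀ᵐ ω ∂μ, X ω < 0) :
    Tendsto (mgf X μ) atTop (𝓝 0) := by
  rw [← integral_zero Ω ℝ (μ := μ)]
  refine tendsto_integral_filter_of_dominated_convergence (fun _ => 1)
    (Eventually.of_forall fun t => by fun_prop) ?_ (integrable_const 1) ?_
  · filter_upwards [eventually_ge_atTop 0] with t ht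
    filter_upwards [hneg] with ω hω
    rw [Real.norm_eq_abs, Real.abs_exp, Real.exp_le_one_iff]
    exact mul_nonpos_of_nonneg_of_nonpos ht hω.le
  · filter_upwards [hneg] with ω hω
    exact Real.tendsto_exp_atBot.comp (tendsto_id.atTop_mul_const_of_neg hω)

lemma tendsto_cgf_atTop_of_ae_neg [NeZero μ] (hX : AEMeasurable X μ)
    (hneg : ∀ᵐ ω ∂μ, X ω < 0) : Tendsto (cgf X μ) atTop atBot := by
  have hpos : ∀ᶠ t in atTop, mgf X μ t ∈ Ioi 0 := by
    filter_upwards [eventually_ge_atTop 0] with t ht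
    exact mgf_pos' (NeZero.ne μ)
      (integrable_exp_mul_of_le t 0 ht hX (hneg.mono fun _ => le_of_lt))
  exact Real.tendsto_log_nhdsGT_zero.comp
    (tendsto_nhdsWithin_iff.2 ⟨tendsto_mgf_atTop_of_ae_neg hX hneg, hpos⟩)

end CumulantGeneratingFunction

lemma measureReal_smul_integral_cond {Ω F : Type*} [MeasurableSpace Ω] [NormedAddCommGroup F]
    [NormedSpace ℝ F] {μ : Measure Ω} {A : Set Ω} (hA : μ A ≠ 0) (hA' : μ A ≠ ⊤) (f : Ω → F) :
    μ.real A • ∫ x, f x ∂μ[|A] = ∫ x in A, f x ∂μ := by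
  rw [ProbabilityTheory.cond, integral_smul_measure, ENNReal.toReal_inv, ← measureReal_def,
    smul_inv_smul₀ (measureReal_ne_zero_iff hA' |>.2 hA)]

section CramerRate

variable {E : Type*} [NormedAddCommGroup E] [InnerProductSpace ℝ E] [MeasurableSpace E]

/-- The logarithmic moment generating function `Λ` of a measure on an inner product space, which is
identified with its dual. Where the integral diverges, the value is the junk `Real.log 0 = 0`
instead of `∞`. -/
def logLaplace (μ : Measure E) (η : E) : ℝ :=
  Real.log (∫ x, Real.exp ⟪x, η⟫ ∂μ)

/-- The Cramér rate function `Λ*` of a probability measure, i.e. the Fenchel–Legendre transform of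
`logLaplace μ`. As in `lambdaStar`, it is valued in `[0, ∞]` because `η = 0` contributes `0`. -/
def cramerRate (μ : Measure E) (y : E) : ℝ≥0∞ :=
  ⨆ η : E, ENNReal.ofReal (⟪y, η⟫ - logLaplace μ η)

lemma logLaplace_smul (μ : Measure E) (t : ℝ) (η : E) :
    logLaplace μ (t • η) = cgf (fun x => ⟪x, η⟫) μ t := by
  simp only [logLaplace, cgf, mgf, inner_smul_right]

variable {μ : Measure E} [IsFiniteMeasure μ]

lemma log_measureReal_add_inner_integral_cond_le_logLaplace [CompleteSpace E] {A : Set E} {η : E}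
    (hA : μ A ≠ 0) (hid : Integrable id μ[|A])
    (hexp : Integrable (fun x => Real.exp ⟪x, η⟫) μ) :
    Real.log (μ.real A) + ⟪∫ x, x ∂μ[|A], η⟫ ≤ logLaplace μ η := by
  have := cond_isProbabilityMeasure hA
  have hApos : 0 < μ.real A := ENNReal.toReal_pos hA (measure_ne_top μ A)
  have hmean : ∫ x, ⟪x, η⟫ ∂μ[|A] = ⟪∫ x, x ∂μ[|A], η⟫ := by
    simp only [real_inner_comm η]
    exact integral_inner hid η
  have hexpA : Integrable (fun x => Real.exp ⟪x, η⟫) μ[|A] :=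
    hexp.restrict.smul_measure (ENNReal.inv_ne_top.2 hA)
  have hjensen : Real.exp ⟪∫ x, x ∂μ[|A], η⟫ ≤ ∫ x, Real.exp ⟪x, η⟫ ∂μ[|A] := by
    rw [← hmean]
    exact convexOn_exp.map_integral_le Real.continuous_exp.continuousOn isClosed_univ
      (ae_of_all _ fun _ => mem_univ _) (hid.inner_const η) hexpA
  have hmul : μ.real A * Real.exp ⟪∫ x, x ∂μ[|A], η⟫ ≤ ∫ x, Real.exp ⟪x, η⟫ ∂μ :=
    calc μ.real A * Real.exp ⟪∫ x, x ∂μ[|A], η⟫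
        ≤ μ.real A * ∫ x, Real.exp ⟪x, η⟫ ∂μ[|A] := by gcongr
      _ = ∫ x in A, Real.exp ⟪x, η⟫ ∂μ :=
          measureReal_smul_integral_cond hA (measure_ne_top μ A) _
      _ ≤ ∫ x, Real.exp ⟪x, η⟫ ∂μ :=
          setIntegral_le_integral hexp (ae_of_all _ fun _ => (Real.exp_pos _).le)
  calc Real.log (μ.real A) + ⟪∫ x, x ∂μ[|A], η⟫
      = Real.log (μ.real A * Real.exp ⟪∫ x, x ∂μ[|A], η⟫) := by
        rw [Real.log_mul hApos.ne' (Real.exp_ne_zero _), Real.log_exp]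
    _ ≤ logLaplace μ η := Real.log_le_log (by positivity) hmul

theorem cramerRate_integral_cond_lt_top [CompleteSpace E] {A : Set E} (hA : μ A ≠ 0)
    (hid : Integrable id μ[|A]) (hexp : ∀ η : E, Integrable (fun x => Real.exp ⟪x, η⟫) μ) :
    cramerRate μ (∫ x, x ∂μ[|A]) < ⊤ := by
  refine (iSup_le fun η => ENNReal.ofReal_le_ofReal ?_).trans_lt
    (ENNReal.ofReal_lt_top (r := -Real.log (μ.real A)))
  linarith [log_measureReal_add_inner_integral_cond_le_logLaplace hA hid (hexp η)]

theorem cramerRate_eq_top_of_ae_inner_lt [OpensMeasurableSpace E] [NeZero μ] {y η : E}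
    (hlt : ∀ᵐ x ∂μ, ⟪x, η⟫ < ⟪y, η⟫) : cramerRate μ y = ⊤ := by
  have hcgf : Tendsto (cgf (fun x => ⟪x, η⟫ - ⟪y, η⟫) μ) atTop atBot :=
    tendsto_cgf_atTop_of_ae_neg (Continuous.aemeasurable (by fun_prop))
      (hlt.mono fun _ => sub_neg.2)
  have hobj : Tendsto (fun t : ℝ => ⟪y, t • η⟫ - logLaplace μ (t • η)) atTop atTop := by
    refine (tendsto_neg_atBot_atTop.comp hcgf).congr' ?_
    filter_upwards [eventually_ge_atTop 0] with t ht
    have hexp : Integrable (fun x => Real.exp (t * ⟪x, η⟫)) μ :=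
      integrable_exp_mul_of_le t ⟪y, η⟫ ht (Continuous.aemeasurable (by fun_prop))
        (hlt.mono fun _ => le_of_lt)
    rw [Function.comp_apply, cgf_sub_const (NeZero.ne μ) hexp, logLaplace_smul, inner_smul_right,
      neg_sub]
  exact top_le_iff.1 (le_of_tendsto' (ENNReal.tendsto_ofReal_atTop.comp hobj) fun t =>
    le_iSup (fun ξ : E => ENNReal.ofReal (⟪y, ξ⟫ - logLaplace μ ξ)) (t • η))

end CramerRate

section Barycenter

variable {E : Type*} [NormedAddCommGroup E] [MeasurableSpace E]

lemma integrable_id_of_ae_mem_isBounded [OpensMeasurableSpace E] [SecondCountableTopology E]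
    {μ : Measure E} [IsFiniteMeasure μ] {K : Set E} (hK : Bornology.IsBounded K)
    (hμ : ∀ᵐ x ∂μ, x ∈ K) : Integrable id μ := by
  obtain ⟨C, hC⟩ := hK.exists_norm_le
  exact Integrable.of_bound aestronglyMeasurable_id C (hμ.mono hC)

lemma measurePreserving_pointReflection {G : Type*} [AddCommGroup G] [MeasurableSpace G]
    [MeasurableAdd G] [MeasurableNeg G] (μ : Measure G) [μ.IsNegInvariant] [μ.IsAddLeftInvariant]
    (y : G) : MeasurePreserving (Equiv.pointReflection y) μ μ := by
  convert Measure.measurePreserving_sub_left μ (y + y) using 1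
  ext x
  simp only [Equiv.pointReflection_apply, vsub_eq_sub, vadd_eq_add]
  abel

lemma measurePreserving_pointReflection_cond_ball [BorelSpace E] (μ : Measure E)
    [μ.IsNegInvariant] [μ.IsAddLeftInvariant] (y : E) (r : ℝ) :
    MeasurePreserving (Equiv.pointReflection y) μ[|Metric.ball y r] μ[|Metric.ball y r] := by
  have hball : Equiv.pointReflection y ⁻¹' Metric.ball y r = Metric.ball y r := by
    ext x
    rw [mem_preimage, Metric.mem_ball, dist_pointReflection_left, Metric.mem_ball']
  have hrestrict :=
    (measurePreserving_pointReflection μ y).restrict_preimage (measurableSet_ball (x := y) (ε := r))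
  rw [hball] at hrestrict
  exact hrestrict.smul_measure _

variable [NormedSpace ℝ E] [BorelSpace E]

lemma integral_id_eq_of_measurePreserving_pointReflection [CompleteSpace E] {ν : Measure E}
    [IsProbabilityMeasure ν] {y : E} (hid : Integrable id ν)
    (hν : MeasurePreserving (Equiv.pointReflection y) ν ν) : ∫ x, x ∂ν = y := by
  have hsub : Integrable (fun x => y - x) ν := (integrable_const y).sub hid
  have hrefl : ∫ x, x ∂ν = y - ∫ x, x ∂ν + y :=
    calc ∫ x, x ∂ν = ∫ x, Equiv.pointReflection y x ∂ν :=
          (hν.integral_comp (Homeomorph.pointReflection y).measurableEmbedding id).symm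
      _ = ∫ x, (y - x + y) ∂ν := rfl
      _ = y - ∫ x, x ∂ν + y := by
          rw [integral_add hsub (integrable_const y),
            integral_sub (g := fun x => x) (integrable_const y) hid]
          simp only [integral_const, probReal_univ, one_smul]
  have htwo : (2 : ℝ) • ∫ x, x ∂ν = (2 : ℝ) • y := by
    rw [two_smul, two_smul]
    nth_rw 1 [hrefl]
    abel
  exact smul_right_injective E two_ne_zero htwo

lemma integral_cond_ball [FiniteDimensional ℝ E] (μ : Measure E) [μ.IsAddHaarMeasure] (y : E)
    {r : ℝ} (hr : 0 < r) : ∫ x, x ∂μ[|Metric.ball y r] = y := by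
  have := cond_isProbabilityMeasure_of_finite (Metric.measure_ball_pos μ y hr).ne'
    measure_ball_lt_top.ne
  exact integral_id_eq_of_measurePreserving_pointReflection
    (integrable_id_of_ae_mem_isBounded Metric.isBounded_ball (ae_cond_mem measurableSet_ball))
    (measurePreserving_pointReflection_cond_ball μ y r)

end Barycenter

section UniformMeasure

variable {E : Type*} [NormedAddCommGroup E] [InnerProductSpace ℝ E] [MeasurableSpace E]

lemma integrable_exp_inner_of_ae_mem_isBounded [OpensMeasurableSpace E] {μ : Measure E}
    [IsFiniteMeasure μ] {K : Set E} (hK : Bornology.IsBounded K) (hμ : ∀ᵐ x ∂μ, x ∈ K)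
    (η : E) : Integrable (fun x => Real.exp ⟪x, η⟫) μ := by
  obtain ⟨C, hC⟩ := hK.exists_norm_le
  have hle : ∀ᵐ x ∂μ, ⟪x, η⟫ ≤ C * ‖η‖ := hμ.mono fun x hx =>
    (real_inner_le_norm x η).trans (mul_le_mul_of_nonneg_right (hC x hx) (norm_nonneg η))
  simpa only [one_mul] using integrable_exp_mul_of_le 1 (C * ‖η‖) zero_le_one
    (Continuous.aemeasurable (by fun_prop)) hle

variable [BorelSpace E] [FiniteDimensional ℝ E] {μ : Measure E} [μ.IsAddHaarMeasure] {K : Set E}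
  {y : E}

theorem cramerRate_cond_lt_top_of_mem_interior (hmeas : MeasurableSet K)
    (hbdd : Bornology.IsBounded K) (hy : y ∈ interior K) : cramerRate μ[|K] y < ⊤ := by
  obtain ⟨r, hr, hball⟩ := Metric.mem_nhds_iff.1 (mem_interior_iff_mem_nhds.1 hy)
  have hcond : μ[|K][|Metric.ball y r] = μ[|Metric.ball y r] := by
    rw [cond_cond_eq_cond_inter' hmeas measurableSet_ball hbdd.measure_lt_top.ne,
      inter_eq_right.2 hball]
  have hpos : μ[|K] (Metric.ball y r) ≠ 0 := by
    rw [cond_apply hmeas, inter_eq_right.2 hball]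
    exact mul_ne_zero (ENNReal.inv_ne_zero.2 hbdd.measure_lt_top.ne)
      (Metric.measure_ball_pos μ y hr).ne'
  have hlt := cramerRate_integral_cond_lt_top hpos
    (integrable_id_of_ae_mem_isBounded Metric.isBounded_ball (ae_cond_mem measurableSet_ball))
    (integrable_exp_inner_of_ae_mem_isBounded hbdd (ae_cond_mem hmeas))
  rwa [hcond, integral_cond_ball μ y hr] at hlt

theorem cramerRate_cond_eq_top_of_notMem (hopen : IsOpen K) (hconv : Convex ℝ K)
    (hbdd : Bornology.IsBounded K) (hne : K.Nonempty) (hy : y ∉ K) : cramerRate μ[|K] y = ⊤ := by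
  have := cond_isProbabilityMeasure_of_finite (hopen.measure_pos μ hne).ne' hbdd.measure_lt_top.ne
  obtain ⟨f, hf⟩ := geometric_hahn_banach_open_point hconv hopen hy
  refine cramerRate_eq_top_of_ae_inner_lt (η := (InnerProductSpace.toDual ℝ E).symm f) ?_
  filter_upwards [ae_cond_mem hopen.measurableSet] with x hx
  rw [real_inner_comm, real_inner_comm _ y, InnerProductSpace.toDual_symm_apply,
    InnerProductSpace.toDual_symm_apply]
  exact hf x hx

theorem statement4_general (hopen : IsOpen K) (hconv : Convex ℝ K) (hbdd : Bornology.IsBounded K)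
    (hne : K.Nonempty) (y : E) : cramerRate μ[|K] y < ⊤ ↔ y ∈ K := by
  refine ⟨fun hlt => ?_, fun hy => ?_⟩
  · by_contra hy
    exact hlt.ne (cramerRate_cond_eq_top_of_notMem hopen hconv hbdd hne hy)
  · exact cramerRate_cond_lt_top_of_mem_interior hopen.measurableSet hbdd
      (hopen.interior_eq.symm ▸ hy)

end UniformMeasure

lemma lambdaStar_eq_cramerRate (R : ℝ) :
    lambdaStar R = cramerRate volume[|Metric.ball (0 : E2) R] :=
  rfl

end

/-- The effective domain of `Λ*` is exactly the open disk of radius `R`. -/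
theorem statement4 (R : ℝ) (hR : 0 < R) (y : E2) :
    lambdaStar R y < ⊤ ↔ ‖y‖ < R := by
  rw [lambdaStar_eq_cramerRate, statement4_general Metric.isOpen_ball (convex_ball 0 R)
    Metric.isBounded_ball (Metric.nonempty_ball.2 hR), mem_ball_zero_iff]
end
end

section
/- For every y ∈ ℝ² with ‖y‖ < R there exists η ∈ ℝ² such that ∇Λ(η) = y; and for every η ∈ ℝ², Λ*(∇Λ(η)) = ⟨η, ∇Λ(η)⟩ − Λ(η). -/
open MeasureTheory Set Filter Topology
open scoped ENNReal RealInnerProductSpace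

noncomputable section

/-!
The gradient of `Λ` at `η` is the mean of the tilted measure proportional to `exp ⟪x, η⟫ μ(dx)`.
Jensen's inequality under the tilted measure says that `Λ` lies above its tangent planes, which is
the Legendre identity. If `y` is interior to the convex hull of the support of `μ`, then `μ` charges
the half-spaces `{x | δ ≤ ⟪x - y, u⟫}` uniformly in the unit vector `u`; by Chernoff's inequality
`Λ - ⟪y, ·⟫` then grows at least linearly, so it has a minimiser, where `∇Λ = y`.
-/

section GeneralMeasure

variable {E : Type*} [NormedAddCommGroup E] [InnerProductSpace ℝ E]

theorem norm_exp_inner_smul_le {x η : E} {r : ℝ} (hη : ‖η‖ ≤ r) :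
    ‖Real.exp ⟪x, η⟫ • x‖ ≤ Real.exp ((r + 1) * ‖x‖) := by
  have hinner : ⟪x, η⟫ ≤ r * ‖x‖ :=
    (real_inner_le_norm x η).trans (by rw [mul_comm]; gcongr)
  have hnorm : ‖x‖ ≤ Real.exp ‖x‖ := by linarith [Real.add_one_le_exp ‖x‖]
  rw [norm_smul, Real.norm_of_nonneg (Real.exp_pos _).le, add_mul, one_mul, Real.exp_add]
  gcongr

theorem exp_mul_norm_le_one_add_sum {ι : Type*} [Fintype ι] (b : OrthonormalBasis ι ℝ E)
    (c : ℝ) (x : E) :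
    Real.exp (c * ‖x‖) ≤ 1 + ∑ i, Real.exp (|c| * √(Fintype.card ι) * |⟪b i, x⟫|) := by
  set C : ℝ := |c| * √(Fintype.card ι)
  have hnorm : c * ‖x‖ ≤ C * ⨆ i, |⟪b i, x⟫| := calc
    c * ‖x‖ ≤ |c| * ‖x‖ := by gcongr; exact le_abs_self c
    _ ≤ |c| * (√(Fintype.card ι) * ⨆ i, |⟪b i, x⟫|) := by
      gcongr
      exact b.norm_le_card_mul_iSup_norm_inner x
    _ = C * ⨆ i, |⟪b i, x⟫| := (mul_assoc _ _ _).symm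
  refine (Real.exp_le_exp.2 hnorm).trans ?_
  cases isEmpty_or_nonempty ι
  · simp
  · obtain ⟨i, hi⟩ := exists_eq_ciSup_of_finite (f := fun i ↦ |⟪b i, x⟫|)
    have hterm := Finset.single_le_sum (f := fun i ↦ Real.exp (C * |⟪b i, x⟫|))
      (fun _ _ ↦ (Real.exp_pos _).le) (Finset.mem_univ i)
    rw [← hi]
    exact hterm.trans (le_add_of_nonneg_left zero_le_one)

theorem exists_mem_inner_sub_pos_of_mem_interior_convexHull {s : Set E} {y u : E}
    (hy : y ∈ interior (convexHull ℝ s)) (hu : u ≠ 0) : ∃ x ∈ s, 0 < ⟪x - y, u⟫ := by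
  by_contra! hs
  have hhull : convexHull ℝ s ⊆ {x | ⟪u, x⟫ ≤ ⟪u, y⟫} := by
    refine convexHull_min (fun x hx ↦ ?_) (convex_halfSpace_le (innerₛₗ ℝ u).isLinear _)
    have := hs x hx
    rwa [inner_sub_left, sub_nonpos, real_inner_comm, real_inner_comm u y] at this
  have hline : Tendsto (fun t : ℝ ↦ y + t • u) (𝓝[>] 0) (𝓝 y) :=
    (Continuous.tendsto' (by fun_prop) 0 y (by simp)).mono_left nhdsWithin_le_nhds
  obtain ⟨t, hmem, ht⟩ :=
    ((hline.eventually (mem_interior_iff_mem_nhds.1 hy)).and self_mem_nhdsWithin).exists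
  have hle : ⟪u, y + t • u⟫ ≤ ⟪u, y⟫ := hhull hmem
  rw [inner_add_right, real_inner_smul_right] at hle
  linarith [mul_pos (mem_Ioi.1 ht) (real_inner_self_pos.2 hu)]

theorem exists_gradient_eq_of_tendsto_sub_inner [FiniteDimensional ℝ E] {f : E → ℝ}
    (hf : Differentiable ℝ f) {y : E}
    (hlim : Tendsto (fun η ↦ f η - ⟪y, η⟫) (cocompact E) atTop) :
    ∃ η, gradient f η = y := by
  obtain ⟨η, hη⟩ := (hf.continuous.sub (by fun_prop)).exists_forall_le hlim
  have hcrit := IsLocalMin.hasFDerivAt_eq_zero (Eventually.of_forall hη)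
    ((hf η).hasFDerivAt.sub ((innerSL ℝ y).hasFDerivAt (x := η)))
  refine ⟨η, ext_inner_right ℝ fun v ↦ ?_⟩
  rw [inner_gradient_left, sub_eq_zero.1 hcrit, innerSL_apply_apply]

variable [MeasurableSpace E]

/-- The logarithmic moment generating function `η ↦ log ∫ exp ⟪x, η⟫ dμ(x)` of a measure `μ` on an
inner product space; `logMGF R` is its instance at the uniform measure on the disk. -/
def logMomentGen (μ : Measure E) (η : E) : ℝ :=
  Real.log (∫ x, Real.exp ⟪x, η⟫ ∂μ)

variable {μ : Measure E}

theorem isFiniteMeasure_of_integrable_exp_inner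
    (hμ : ∀ η : E, Integrable (fun x ↦ Real.exp ⟪x, η⟫) μ) : IsFiniteMeasure μ := by
  have hconst : Integrable (fun _ : E ↦ (1 : ℝ)) μ := by simpa using hμ 0
  exact (integrable_const_iff_isFiniteMeasure one_ne_zero).1 hconst

theorem cgf_inner_sub [NeZero μ] {u : E} {t : ℝ}
    (hint : Integrable (fun x ↦ Real.exp ⟪x, t • u⟫) μ) (y : E) :
    ProbabilityTheory.cgf (fun x ↦ ⟪x - y, u⟫) μ t =
      logMomentGen μ (t • u) - ⟪y, t • u⟫ := by
  have hexp (x : E) : Real.exp (t * ⟪x - y, u⟫) =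
      Real.exp ⟪x, t • u⟫ * Real.exp (-⟪y, t • u⟫) := by
    rw [← Real.exp_add, ← real_inner_smul_right, inner_sub_left, sub_eq_add_neg]
  simp only [ProbabilityTheory.cgf, ProbabilityTheory.mgf, hexp]
  rw [integral_mul_const, Real.log_mul (integral_exp_pos hint).ne' (Real.exp_pos _).ne',
    Real.log_exp, logMomentGen, sub_eq_add_neg]

theorem exists_pos_forall_le_measureReal_le_inner_sub [FiniteDimensional ℝ E] [IsFiniteMeasure μ]
    {y : E} (hy : y ∈ interior (convexHull ℝ μ.support)) :
    ∃ δ > 0, ∀ u ∈ Metric.sphere (0 : E) 1, δ ≤ μ.real {x | δ ≤ ⟪x - y, u⟫} := by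
  have mono {δ ε : ℝ} (hδε : δ ≤ ε) {u : E} (hu : ε ≤ μ.real {x | ε ≤ ⟪x - y, u⟫}) :
      δ ≤ μ.real {x | δ ≤ ⟪x - y, u⟫} :=
    (hδε.trans hu).trans (measureReal_mono fun _ hx ↦ hδε.trans hx)
  refine (isCompact_sphere (0 : E) 1).induction_on ⟨1, one_pos, by simp⟩
    (fun s t hst ⟨δ, hδ, ht⟩ ↦ ⟨δ, hδ, fun u hu ↦ ht u (hst hu)⟩) ?_ fun u hu ↦ ?_
  · rintro s t ⟨δ, hδ, hs⟩ ⟨ε, hε, ht⟩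
    refine ⟨min δ ε, lt_min hδ hε, ?_⟩
    rintro u (hu | hu)
    · exact mono (min_le_left _ _) (hs u hu)
    · exact mono (min_le_right _ _) (ht u hu)
  · obtain ⟨x, hx, hxu⟩ := exists_mem_inner_sub_pos_of_mem_interior_convexHull hy
      (ne_zero_of_mem_unit_sphere ⟨u, hu⟩)
    obtain ⟨c, hc, hcx⟩ := exists_between hxu
    have hnear : ∀ᶠ p : E × E in 𝓝 x ×ˢ 𝓝 u, c < ⟪p.1 - y, p.2⟫ := by
      rw [← nhds_prod_eq]
      exact (ContinuousAt.tendsto (by fun_prop)).eventually_const_lt hcx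
    obtain ⟨U, hU, V, hV, hUV⟩ := mem_prod_iff.1 hnear
    have hμU : 0 < μ.real U :=
      ENNReal.toReal_pos ((Measure.mem_support_iff_forall x).1 hx U hU).ne' (measure_ne_top μ U)
    refine ⟨V, mem_nhdsWithin_of_mem_nhds hV, min c (μ.real U), lt_min hc hμU, fun v hv ↦ ?_⟩
    refine (min_le_right _ _).trans (measureReal_mono fun z hz ↦ ?_)
    have hzv : c < ⟪z - y, v⟫ := hUV (mk_mem_prod hz hv)
    exact (min_le_left _ _).trans hzv.le

theorem tendsto_logMomentGen_sub_inner_atTop [FiniteDimensional ℝ E]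
    (hμ : ∀ η : E, Integrable (fun x ↦ Real.exp ⟪x, η⟫) μ) {y : E}
    (hy : y ∈ interior (convexHull ℝ μ.support)) :
    Tendsto (fun η ↦ logMomentGen μ η - ⟪y, η⟫) (cocompact E) atTop := by
  have := isFiniteMeasure_of_integrable_exp_inner hμ
  have : NeZero μ := ⟨by rintro rfl; simp at hy⟩
  obtain ⟨δ, hδ, hsphere⟩ := exists_pos_forall_le_measureReal_le_inner_sub hy
  have hlinear : Tendsto (fun η : E ↦ ‖η‖ * δ + Real.log δ) (cocompact E) atTop :=
    tendsto_atTop_add_const_right _ _ (tendsto_norm_cocompact_atTop.atTop_mul_const hδ)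
  refine tendsto_atTop_mono' _ ?_ hlinear
  filter_upwards [isCompact_singleton.compl_mem_cocompact] with η (hη : η ≠ 0)
  set u := ‖η‖⁻¹ • η
  have hu : u ∈ Metric.sphere (0 : E) 1 := by
    simpa using norm_smul_inv_norm (𝕜 := ℝ) hη
  have hηu : ‖η‖ • u = η := smul_inv_smul₀ (norm_ne_zero_iff.2 hη) η
  have hint : Integrable (fun x ↦ Real.exp (‖η‖ * ⟪x - y, u⟫)) μ := by
    simp_rw [← real_inner_smul_right, hηu, inner_sub_left, Real.exp_sub]
    exact (hμ η).div_const _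
  have hchernoff : δ ≤ Real.exp (-‖η‖ * δ + (logMomentGen μ η - ⟪y, η⟫)) := by
    have := ProbabilityTheory.measure_ge_le_exp_cgf δ (norm_nonneg η) hint
    rw [cgf_inner_sub (hμ _), hηu] at this
    exact (hsphere u hu).trans this
  linarith [(Real.log_le_iff_le_exp hδ).2 hchernoff]

variable [FiniteDimensional ℝ E] [BorelSpace E]

theorem integrable_exp_mul_norm (hμ : ∀ η : E, Integrable (fun x ↦ Real.exp ⟪x, η⟫) μ) (c : ℝ) :
    Integrable (fun x ↦ Real.exp (c * ‖x‖)) μ := by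
  have := isFiniteMeasure_of_integrable_exp_inner hμ
  let b := stdOrthonormalBasis ℝ E
  have hcoord (t : ℝ) (i) : Integrable (fun x ↦ Real.exp (t * |⟪b i, x⟫|)) μ := by
    refine ProbabilityTheory.integrable_exp_mul_abs ?_ ?_ <;>
    · simp_rw [← real_inner_smul_left, real_inner_comm]
      exact hμ _
  have hbound : Integrable (fun x ↦ 1 + ∑ i, Real.exp
      (|c| * √(Fintype.card (Fin (Module.finrank ℝ E))) * |⟪b i, x⟫|)) μ :=
    (integrable_const 1).add (integrable_finsetSum _ fun i _ ↦ hcoord _ i)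
  refine hbound.mono' (by fun_prop) (Eventually.of_forall fun x ↦ ?_)
  rw [Real.norm_of_nonneg (Real.exp_pos _).le]
  exact exp_mul_norm_le_one_add_sum b c x

theorem integrable_exp_inner_smul (hμ : ∀ η : E, Integrable (fun x ↦ Real.exp ⟪x, η⟫) μ) (η : E) :
    Integrable (fun x ↦ Real.exp ⟪x, η⟫ • x) μ :=
  (integrable_exp_mul_norm hμ (‖η‖ + 1)).mono' (by fun_prop)
    (Eventually.of_forall fun _ ↦ norm_exp_inner_smul_le le_rfl)

theorem hasGradientAt_integral_exp_inner
    (hμ : ∀ η : E, Integrable (fun x ↦ Real.exp ⟪x, η⟫) μ) (η : E) :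
    HasGradientAt (fun ξ ↦ ∫ x, Real.exp ⟪x, ξ⟫ ∂μ) (∫ x, Real.exp ⟪x, η⟫ • x ∂μ) η := by
  have hderiv : HasFDerivAt (fun ξ ↦ ∫ x, Real.exp ⟪x, ξ⟫ ∂μ)
      (∫ x, Real.exp ⟪x, η⟫ • innerSL ℝ x ∂μ) η := by
    refine hasFDerivAt_integral_of_dominated_of_fderiv_le
      (F' := fun ξ x ↦ Real.exp ⟪x, ξ⟫ • innerSL ℝ x) (Metric.ball_mem_nhds η one_pos)
      (Eventually.of_forall fun ξ ↦ (hμ ξ).aestronglyMeasurable) (hμ η)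
      (Continuous.aestronglyMeasurable (by fun_prop)) ?_
      (integrable_exp_mul_norm hμ (‖η‖ + 1 + 1))
      (Eventually.of_forall fun x ξ _ ↦ ((innerSL ℝ x).hasFDerivAt (x := ξ)).exp)
    refine Eventually.of_forall fun x ξ hξ ↦ ?_
    rw [norm_smul, innerSL_apply_norm, ← norm_smul]
    refine norm_exp_inner_smul_le ?_
    linarith [mem_ball_iff_norm.1 hξ, norm_le_norm_add_norm_sub' ξ η]
  have hint : Integrable (fun x ↦ Real.exp ⟪x, η⟫ • innerSL ℝ x) μ :=
    (integrable_exp_inner_smul hμ η).mono (Continuous.aestronglyMeasurable (by fun_prop))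
      (Eventually.of_forall fun x ↦ by rw [norm_smul, norm_smul, innerSL_apply_norm])
  refine hasGradientAt_iff_hasFDerivAt.2 (hderiv.congr_fderiv (ContinuousLinearMap.ext fun v ↦ ?_))
  rw [InnerProductSpace.toDual_apply_apply, real_inner_comm,
    ← integral_inner (integrable_exp_inner_smul hμ η), ContinuousLinearMap.integral_apply hint]
  simp only [real_inner_smul_right, real_inner_comm, smul_apply, innerSL_apply_apply, smul_eq_mul]

theorem hasGradientAt_logMomentGen [NeZero μ]
    (hμ : ∀ η : E, Integrable (fun x ↦ Real.exp ⟪x, η⟫) μ) (η : E) :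
    HasGradientAt (logMomentGen μ) (∫ x, x ∂μ.tilted fun x ↦ ⟪x, η⟫) η := by
  have hlog := (hasGradientAt_integral_exp_inner hμ η).hasFDerivAt.log
    (integral_exp_pos (hμ η)).ne'
  rw [hasGradientAt_iff_hasFDerivAt, integral_tilted]
  simp_rw [div_eq_inv_mul, mul_smul]
  rw [integral_smul, map_smulₛₗ]
  exact hlog

theorem inner_gradient_logMomentGen_sub_le [NeZero μ]
    (hμ : ∀ η : E, Integrable (fun x ↦ Real.exp ⟪x, η⟫) μ) (η ξ : E) :
    ⟪gradient (logMomentGen μ) η, ξ - η⟫ ≤ logMomentGen μ ξ - logMomentGen μ η := by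
  have := isProbabilityMeasure_tilted (hμ η)
  set ν := μ.tilted fun x ↦ ⟪x, η⟫
  have hsplit (x : E) : ⟪x, η⟫ + ⟪x, ξ - η⟫ = ⟪x, ξ⟫ := by
    rw [← inner_add_right, add_sub_cancel]
  have hid : Integrable (fun x ↦ x) ν :=
    (integrable_tilted_iff (hμ η) _).2 (integrable_exp_inner_smul hμ η)
  have hexp : Integrable (fun x ↦ Real.exp ⟪x, ξ - η⟫) ν := by
    refine (integrable_tilted_iff (hμ η) _).2 ?_
    simpa only [smul_eq_mul, ← Real.exp_add, hsplit] using hμ ξ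
  have hjensen : Real.exp (∫ x, ⟪x, ξ - η⟫ ∂ν) ≤ ∫ x, Real.exp ⟪x, ξ - η⟫ ∂ν :=
    convexOn_exp.map_integral_le Real.continuous_exp.continuousOn isClosed_univ
      (Eventually.of_forall fun _ ↦ mem_univ _) (hid.inner_const _) hexp
  have hratio : ∫ x, Real.exp ⟪x, ξ - η⟫ ∂ν =
      (∫ x, Real.exp ⟪x, ξ⟫ ∂μ) / ∫ x, Real.exp ⟪x, η⟫ ∂μ := by
    simp only [ν, integral_exp_tilted, Pi.add_apply, hsplit]
  have hξ := integral_exp_pos (hμ ξ)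
  have hη := integral_exp_pos (hμ η)
  rw [(hasGradientAt_logMomentGen hμ η).gradient, logMomentGen, logMomentGen,
    ← Real.log_div hξ.ne' hη.ne', Real.le_log_iff_exp_le (div_pos hξ hη), ← hratio,
    real_inner_comm, ← integral_inner hid]
  simpa only [real_inner_comm] using hjensen

theorem isGreatest_inner_gradient_sub_logMomentGen [NeZero μ]
    (hμ : ∀ η : E, Integrable (fun x ↦ Real.exp ⟪x, η⟫) μ) (η : E) :
    IsGreatest (range fun ξ ↦ ⟪gradient (logMomentGen μ) η, ξ⟫ - logMomentGen μ ξ)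
      (⟪η, gradient (logMomentGen μ) η⟫ - logMomentGen μ η) := by
  rw [real_inner_comm]
  refine ⟨mem_range_self η, forall_mem_range.2 fun ξ ↦ ?_⟩
  have htangent := inner_gradient_logMomentGen_sub_le hμ η ξ
  rw [inner_sub_right] at htangent
  linarith

theorem statement5_general [NeZero μ]
    (hμ : ∀ η : E, Integrable (fun x ↦ Real.exp ⟪x, η⟫) μ) :
    (∀ y ∈ interior (convexHull ℝ μ.support), ∃ η, gradient (logMomentGen μ) η = y) ∧
    ∀ η, IsGreatest (range fun ξ ↦ ⟪gradient (logMomentGen μ) η, ξ⟫ - logMomentGen μ ξ)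
      (⟪η, gradient (logMomentGen μ) η⟫ - logMomentGen μ η) :=
  ⟨fun _ hy ↦ exists_gradient_eq_of_tendsto_sub_inner
      (fun η ↦ (hasGradientAt_logMomentGen hμ η).differentiableAt)
      (tendsto_logMomentGen_sub_inner_atTop hμ hy),
    isGreatest_inner_gradient_sub_logMomentGen hμ⟩

end GeneralMeasure

section UniformOn

theorem interior_subset_support_uniformOn {α : Type*} [TopologicalSpace α] [MeasureSpace α]
    [(volume : Measure α).IsOpenPosMeasure] {A : Set α}
    (hA : volume A ≠ ∞) : interior A ⊆ (uniformOn A).support := by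
  intro x hx
  refine (Measure.mem_support_iff_forall x).2 fun U hU ↦ ?_
  have hUA : 0 < volume (U ∩ A) := Measure.measure_pos_of_mem_nhds _
    (inter_mem hU (mem_interior_iff_mem_nhds.1 hx))
  exact ENNReal.mul_pos (ENNReal.inv_ne_zero.2 hA)
    (hUA.trans_le (Measure.le_restrict_apply A U)).ne'

theorem isProbabilityMeasure_uniformOn {α : Type*} [MeasureSpace α] {A : Set α}
    (hA₀ : volume A ≠ 0) (hA : volume A ≠ ∞) : IsProbabilityMeasure (uniformOn A) :=
  ⟨by simp [uniformOn, ENNReal.inv_mul_cancel hA₀ hA]⟩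

theorem integrable_uniformOn_of_continuous {α F : Type*} [PseudoMetricSpace α] [ProperSpace α]
    [MeasureSpace α] [OpensMeasurableSpace α] [IsFiniteMeasureOnCompacts (volume : Measure α)]
    [NormedAddCommGroup F] {A : Set α} (hA : Bornology.IsBounded A)
    (hA₀ : volume A ≠ 0) {f : α → F} (hf : Continuous f) : Integrable f (uniformOn A) :=
  have hclosure : IntegrableOn f (closure A) :=
    hf.continuousOn.integrableOn_compact' hA.isCompact_closure isClosed_closure.measurableSet
  (hclosure.mono_set subset_closure).smul_measure (ENNReal.inv_ne_top.2 hA₀)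

theorem interior_subset_interior_convexHull_support_uniformOn {F : Type*}
    [AddCommGroup F] [Module ℝ F] [TopologicalSpace F] [MeasureSpace F]
    [(volume : Measure F).IsOpenPosMeasure] {A : Set F} (hA : volume A ≠ ∞) :
    interior A ⊆ interior (convexHull ℝ (uniformOn A).support) :=
  interior_maximal ((interior_subset_support_uniformOn hA).trans (subset_convexHull ℝ _))
    isOpen_interior

variable {R : ℝ}

theorem isProbabilityMeasure_uniformOn_ball {α : Type*} [PseudoMetricSpace α] [ProperSpace α]
    [MeasureSpace α] [IsFiniteMeasureOnCompacts (volume : Measure α)]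
    [(volume : Measure α).IsOpenPosMeasure] (hR : 0 < R) (z : α) :
    IsProbabilityMeasure (uniformOn (Metric.ball z R)) :=
  isProbabilityMeasure_uniformOn (Metric.measure_ball_pos _ _ hR).ne' measure_ball_lt_top.ne

theorem integrable_exp_inner_uniformOn_ball {E : Type*} [NormedAddCommGroup E]
    [InnerProductSpace ℝ E] [ProperSpace E] [MeasureSpace E] [OpensMeasurableSpace E]
    [IsFiniteMeasureOnCompacts (volume : Measure E)] [(volume : Measure E).IsOpenPosMeasure]
    (hR : 0 < R) (z η : E) :
    Integrable (fun x ↦ Real.exp ⟪x, η⟫) (uniformOn (Metric.ball z R)) :=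
  integrable_uniformOn_of_continuous Metric.isBounded_ball (Metric.measure_ball_pos _ _ hR).ne'
    (by fun_prop)

theorem ball_subset_interior_convexHull_support_uniformOn_ball {E : Type*}
    [SeminormedAddCommGroup E] [Module ℝ E] [ProperSpace E] [MeasureSpace E]
    [IsFiniteMeasureOnCompacts (volume : Measure E)] [(volume : Measure E).IsOpenPosMeasure]
    (z : E) :
    Metric.ball z R ⊆ interior (convexHull ℝ (uniformOn (Metric.ball z R)).support) :=
  Metric.isOpen_ball.interior_eq.symm.subset.trans
    (interior_subset_interior_convexHull_support_uniformOn measure_ball_lt_top.ne)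

end UniformOn

theorem iSup_ofReal_eq_of_isGreatest {ι : Type*} {f : ι → ℝ} {a : ℝ} (h : IsGreatest (range f) a) :
    ⨆ i, ENNReal.ofReal (f i) = ENNReal.ofReal a := by
  have := (ENNReal.ofReal_mono.map_isGreatest h).isLUB
  rw [← range_comp] at this
  exact this.iSup_eq

/-- Every point of the open disk of radius `R` is a value of `∇Λ`, and
`Λ*(∇Λ(η)) = ⟨η, ∇Λ(η)⟩ − Λ(η)` for every `η`. -/
theorem statement5 (R : ℝ) (hR : 0 < R) :
    (∀ y : E2, ‖y‖ < R → ∃ η : E2, gradient (logMGF R) η = y) ∧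
    (∀ η : E2, lambdaStar R (gradient (logMGF R) η) =
      ENNReal.ofReal (⟪η, gradient (logMGF R) η⟫ - logMGF R η)) := by
  have := isProbabilityMeasure_uniformOn_ball hR (0 : E2)
  obtain ⟨hrange, hconj⟩ := statement5_general (integrable_exp_inner_uniformOn_ball hR (0 : E2))
  exact ⟨fun y hy ↦ hrange y (ball_subset_interior_convexHull_support_uniformOn_ball 0
    (mem_ball_zero_iff.2 hy)), fun η ↦ iSup_ofReal_eq_of_isGreatest (hconj η)⟩
end
end

section
/- The function I_E : C([0,1],ℝ²) → [0,∞] defined by I_E(φ) = ∫₀¹ Λ*(φ'(t)) dt if φ is absolutely continuous with φ(0) ∈ cl E, and I_E(φ) = ∞ otherwise, is a good rate function on C([0,1],ℝ²) with the sup metric: it is lower semicontinuous and for every α ∈ [0,∞) the sublevel set {φ : I_E(φ) ≤ α} is compact. -/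
open MeasureTheory Set Filter Topology
open scoped ENNReal RealInnerProductSpace

noncomputable section

/-- The unit interval `[0,1]` as a subset of `ℝ`. -/
abbrev I01 : Set ℝ := Set.Icc 0 1

/-- The space `C([0,1], ℝ²)` of continuous paths, with the sup metric. -/
abbrev PathSp := C(I01, E2)

instance : MeasurableSpace PathSp := borel PathSp
instance : BorelSpace PathSp := ⟨rfl⟩

def pt0 : I01 := ⟨0, Set.left_mem_Icc.mpr zero_le_one⟩
def pt1 : I01 := ⟨1, Set.right_mem_Icc.mpr zero_le_one⟩

/-- `g` is an (integrable) a.e.-derivative representation of the path `φ`: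
`φ(t) = φ(0) + ∫₀ᵗ g(s) ds` on `[0,1]`.  A path is absolutely continuous iff it admits such a
representation, and any two representations agree a.e. on `[0,1]`. -/
def Represents (φ : PathSp) (g : ℝ → E2) : Prop :=
  IntegrableOn g I01 volume ∧ ∀ t : I01, (φ t : E2) = φ pt0 + ∫ s in (0:ℝ)..(t : ℝ), g s

/-- The rate function `I_E(φ) = ∫₀¹ Λ*(φ'(t)) dt` if `φ` is absolutely continuous with
`φ(0) ∈ cl E`, and `∞` otherwise.  (All derivative representations of a given `φ` yield the
same integral, so the infimum below is the common value; it is `∞` when no representation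
exists, i.e. when `φ` is not absolutely continuous or `φ(0) ∉ cl E`.) -/
def rateFun (R : ℝ) (E : Set E2) (φ : PathSp) : ℝ≥0∞ :=
  ⨅ (g : ℝ → E2) (_ : Represents φ g ∧ (φ pt0 : E2) ∈ closure E),
    ∫⁻ t in I01, lambdaStar R (g t)

/-!
Everything rests on a linear bound `Λ η ≤ K ‖η‖`: the Legendre transform `L` of `Λ` is then infinite
outside the ball of radius `K`, so a path of finite action is `K`-Lipschitz, and the `K`-Lipschitz
paths started in a compact set form a compact set by Arzelà–Ascoli. It remains to see that the
bound `∫₀¹ L(φ') ≤ c` is closed, although `φ ↦ φ'` is not continuous. To this end derivatives are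
replaced by difference quotients: `∫₀^{1-h} L(h⁻¹(φ(t+h) - φ(t))) dt` is lower semicontinuous in
`φ`, at most `∫₀¹ L(φ')` by Jensen's inequality, and recovers `∫₀¹ L(φ')` as `h → 0` by Fatou's
lemma and Rademacher's theorem.
-/

open scoped NNReal

section Integration

variable {α X : Type*} [MeasurableSpace α] {μ : Measure α}

lemma ofReal_integral_le_lintegral_ofReal {f : α → ℝ} (hf : Integrable f μ) :
    ENNReal.ofReal (∫ x, f x ∂μ) ≤ ∫⁻ x, ENNReal.ofReal (f x) ∂μ := by
  rw [integral_eq_lintegral_pos_part_sub_lintegral_neg_part hf]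
  exact (ENNReal.ofReal_le_ofReal (sub_le_self _ ENNReal.toReal_nonneg)).trans
    ENNReal.ofReal_toReal_le

lemma lowerSemicontinuous_lintegral [TopologicalSpace X] [FirstCountableTopology X]
    {f : X → α → ℝ≥0∞} (hmeas : ∀ x, Measurable (f x))
    (hlsc : ∀ a, LowerSemicontinuous fun x ↦ f x a) :
    LowerSemicontinuous fun x ↦ ∫⁻ a, f x a ∂μ :=
  lowerSemicontinuous_iff_le_liminf.2 fun x ↦
    (lintegral_mono fun a ↦ (hlsc a).le_liminf x).trans (lintegral_liminf_le hmeas)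

lemma lintegral_setLIntegral_Ioc_add {F : ℝ → ℝ≥0∞} (hF : AEMeasurable F) (h : ℝ) :
    ∫⁻ t, ∫⁻ s in Ioc t (t + h), F s = ENNReal.ofReal h * ∫⁻ s, F s := by
  have hwindow (t s : ℝ) : s ∈ Ioc t (t + h) ↔ t ∈ Ico (s - h) s := by
    simp only [mem_Ioc, mem_Ico, sub_le_iff_le_add, and_comm]
  have hmeas : MeasurableSet {p : ℝ × ℝ | p.2 ∈ Ioc p.1 (p.1 + h)} :=
    (measurableSet_lt measurable_fst measurable_snd).inter
      (measurableSet_le measurable_snd (measurable_fst.add_const h))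
  calc ∫⁻ t, ∫⁻ s in Ioc t (t + h), F s
      = ∫⁻ t, ∫⁻ s, {p : ℝ × ℝ | p.2 ∈ Ioc p.1 (p.1 + h)}.indicator (fun p ↦ F p.2) (t, s) :=
        lintegral_congr fun t ↦ (lintegral_indicator measurableSet_Ioc F).symm
    _ = ∫⁻ s, ∫⁻ t, {p : ℝ × ℝ | p.2 ∈ Ioc p.1 (p.1 + h)}.indicator (fun p ↦ F p.2) (t, s) :=
        lintegral_lintegral_swap (hF.comp_snd.indicator hmeas)
    _ = ∫⁻ s, ∫⁻ _ in Ico (s - h) s, F s := lintegral_congr fun s ↦ by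
        rw [← lintegral_indicator measurableSet_Ico]
        simp only [indicator, mem_ofPred_eq, hwindow]
    _ = ENNReal.ofReal h * ∫⁻ s, F s := by
        simp only [setLIntegral_const, Real.volume_Ico, sub_sub_cancel]
        rw [lintegral_mul_const' _ _ ENNReal.ofReal_ne_top, mul_comm]

end Integration

section Lipschitz

lemma lipschitzWith_iccExtend {X : Type*} [PseudoEMetricSpace X] {a b : ℝ} (hab : a ≤ b)
    {f : Icc a b → X} {K : ℝ≥0} (hf : LipschitzWith K f) : LipschitzWith K (IccExtend hab f) := by
  simpa only [mul_one] using! hf.comp (LipschitzWith.projIcc hab)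

lemma isCompact_setOf_lipschitzWith {X Y : Type*} [PseudoMetricSpace X] [MetricSpace Y]
    [ProperSpace Y] (K : ℝ≥0) (x₀ : X) {F : Set Y} (hF : IsCompact F) :
    IsCompact {φ : C(X, Y) | φ x₀ ∈ F ∧ LipschitzWith K φ} := by
  apply ArzelaAscoli.isCompact_of_equicontinuous
  · have himage : ContinuousMap.toFun '' {φ : C(X, Y) | φ x₀ ∈ F ∧ LipschitzWith K φ} =
        {f | f x₀ ∈ F ∧ LipschitzWith K f} :=
      Subset.antisymm (image_subset_iff.2 fun _ hφ ↦ hφ) fun f hf ↦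
        ⟨⟨f, hf.2.continuous⟩, hf, rfl⟩
    have hclosed : IsClosed {f : X → Y | f x₀ ∈ F ∧ LipschitzWith K f} :=
      (hF.isClosed.preimage (continuous_apply x₀)).inter (isClosed_setOfPred_lipschitzWith K)
    rw [himage]
    exact (isCompact_univ_pi fun x ↦ hF.cthickening (r := K * dist x x₀)).of_isClosed_subset
      hclosed fun f hf x _ ↦ Metric.mem_cthickening_of_dist_le _ _ _ _ hf.1 (hf.2.dist_le_mul x x₀)
  · exact (LipschitzWith.uniformEquicontinuous _ K fun φ ↦ φ.2.2).equicontinuous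

lemma isClosed_setOf_continuousMap_lipschitzWith {X Y : Type*} [PseudoEMetricSpace X]
    [PseudoEMetricSpace Y] (K : ℝ≥0) : IsClosed {φ : C(X, Y) | LipschitzWith K φ} :=
  (isClosed_setOfPred_lipschitzWith K).preimage continuous_coeFun

variable {V : Type*} [NormedAddCommGroup V] [NormedSpace ℝ V] [FiniteDimensional ℝ V]
  {K : ℝ≥0} {f : ℝ → V}

lemma locallyIntegrable_deriv_of_lipschitzWith (hf : LipschitzWith K f) :
    LocallyIntegrable (deriv f) := by
  have : CompleteSpace V := FiniteDimensional.complete ℝ V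
  exact (locallyIntegrable_const (K : ℝ)).mono (stronglyMeasurable_deriv f).aestronglyMeasurable
    (ae_of_all _ fun x ↦ by simpa using norm_deriv_le_of_lipschitz hf)

lemma integral_deriv_of_lipschitzWith (hf : LipschitzWith K f) (a b : ℝ) :
    ∫ x in a..b, deriv f x = f b - f a := by
  have : CompleteSpace V := FiniteDimensional.complete ℝ V
  have hint : IntervalIntegrable (deriv f) volume a b :=
    ((locallyIntegrable_deriv_of_lipschitzWith hf).integrableOn_isCompact
      isCompact_uIcc).intervalIntegrable
  refine (SeparatingDual.eq_iff_forall_dual_eq (R := ℝ)).2 fun ℓ ↦ ?_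
  have hderiv : ∀ᵐ x, ℓ (deriv f x) = deriv (ℓ ∘ f) x := by
    filter_upwards [hf.ae_differentiableAt_real] with x hx
    exact (ℓ.hasFDerivAt.comp_hasDerivAt x hx.hasDerivAt).deriv.symm
  calc ℓ (∫ x in a..b, deriv f x) = ∫ x in a..b, ℓ (deriv f x) :=
        (ℓ.intervalIntegral_comp_comm hint).symm
    _ = ∫ x in a..b, deriv (ℓ ∘ f) x :=
        intervalIntegral.integral_congr_ae (hderiv.mono fun _ hx _ ↦ hx)
    _ = (ℓ ∘ f) b - (ℓ ∘ f) a :=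
        ((ℓ.lipschitz.comp hf).lipschitzOnWith.absolutelyContinuousOnInterval).integral_deriv_eq_sub
    _ = ℓ (f b - f a) := (map_sub ℓ _ _).symm

end Lipschitz

section Legendre

variable {V : Type*} [NormedAddCommGroup V] [InnerProductSpace ℝ V]

lemma log_integral_exp_inner_le [MeasurableSpace V] [OpensMeasurableSpace V] {μ : Measure V}
    [IsProbabilityMeasure μ] {R : ℝ} (hμ : ∀ᵐ x ∂μ, ‖x‖ ≤ R) (η : V) :
    Real.log (∫ x, Real.exp ⟪x, η⟫ ∂μ) ≤ R * ‖η‖ := by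
  have hexp : ∀ᵐ x ∂μ, ‖Real.exp ⟪x, η⟫‖ ≤ Real.exp (R * ‖η‖) := by
    filter_upwards [hμ] with x hx
    rw [Real.norm_of_nonneg (Real.exp_pos _).le, Real.exp_le_exp]
    exact (real_inner_le_norm x η).trans (by gcongr)
  have hcont : Continuous fun x : V ↦ Real.exp ⟪x, η⟫ := by fun_prop
  have hpos : 0 < ∫ x, Real.exp ⟪x, η⟫ ∂μ :=
    integral_exp_pos (.of_bound hcont.aestronglyMeasurable _ hexp)
  rw [Real.log_le_iff_le_exp hpos]
  simpa [abs_of_pos hpos] using norm_integral_le_of_norm_le_const hexp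

lemma logMGF_le {R : ℝ} (hR : 0 < R) (η : E2) : logMGF R η ≤ R * ‖η‖ := by
  have hball : volume (Metric.ball (0 : E2) R) ≠ 0 := (Metric.measure_ball_pos volume _ hR).ne'
  have : IsProbabilityMeasure (uniformOn (Metric.ball (0 : E2) R)) :=
    ProbabilityTheory.cond_isProbabilityMeasure_of_finite hball measure_ball_lt_top.ne
  have hnorm : ∀ᵐ x ∂uniformOn (Metric.ball (0 : E2) R), ‖x‖ ≤ R :=
    ProbabilityTheory.ae_cond_of_forall_mem measurableSet_ball fun x hx ↦
      (mem_ball_zero_iff.1 hx).le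
  exact log_integral_exp_inner_le hnorm η

/-- The Fenchel–Legendre transform `y ↦ sup_η (⟪y, η⟫ - Λ η)`, with negative values truncated to
`0` so that it is valued in `[0,∞]`. -/
def legendreTransform (Λ : V → ℝ) (y : V) : ℝ≥0∞ :=
  ⨆ η : V, ENNReal.ofReal (⟪y, η⟫ - Λ η)

variable (Λ : V → ℝ)

lemma ofReal_inner_sub_le_legendreTransform (y η : V) :
    ENNReal.ofReal (⟪y, η⟫ - Λ η) ≤ legendreTransform Λ y :=
  le_iSup (fun η ↦ ENNReal.ofReal (⟪y, η⟫ - Λ η)) η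

lemma lowerSemicontinuous_legendreTransform : LowerSemicontinuous (legendreTransform Λ) :=
  lowerSemicontinuous_iSup fun _ ↦ Continuous.lowerSemicontinuous <|
    ENNReal.continuous_ofReal.comp (by fun_prop)

section Jensen

variable [CompleteSpace V] {α : Type*} [MeasurableSpace α] {μ : Measure α} {g : α → V}

lemma legendreTransform_integral_le [IsProbabilityMeasure μ] (hg : Integrable g μ) :
    legendreTransform Λ (∫ x, g x ∂μ) ≤ ∫⁻ x, legendreTransform Λ (g x) ∂μ := by
  refine iSup_le fun η ↦ ?_
  have hinner : Integrable (fun x ↦ ⟪g x, η⟫) μ := hg.inner_const η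
  have hint : ⟪∫ x, g x ∂μ, η⟫ - Λ η = ∫ x, (⟪g x, η⟫ - Λ η) ∂μ := by
    rw [integral_sub hinner (integrable_const _), integral_const, probReal_univ, one_smul,
      real_inner_comm, ← integral_inner hg]
    simp only [real_inner_comm]
  calc ENNReal.ofReal (⟪∫ x, g x ∂μ, η⟫ - Λ η)
      ≤ ∫⁻ x, ENNReal.ofReal (⟪g x, η⟫ - Λ η) ∂μ := by
        rw [hint]
        exact ofReal_integral_le_lintegral_ofReal (hinner.sub (integrable_const _))
    _ ≤ ∫⁻ x, legendreTransform Λ (g x) ∂μ :=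
        lintegral_mono fun x ↦ ofReal_inner_sub_le_legendreTransform Λ (g x) η

lemma legendreTransform_average_le [IsFiniteMeasure μ] [NeZero μ] (hg : Integrable g μ) :
    legendreTransform Λ (⨍ x, g x ∂μ) ≤ ⨍⁻ x, legendreTransform Λ (g x) ∂μ :=
  legendreTransform_integral_le Λ hg.to_average

end Jensen

variable {Λ}

lemma legendreTransform_eq_top_of_lt_norm {K : ℝ≥0} (hΛ : ∀ η, Λ η ≤ K * ‖η‖) {y : V}
    (hy : K < ‖y‖) : legendreTransform Λ y = ∞ := by
  have hpos : 0 < ‖y‖ * (‖y‖ - K) := mul_pos (K.2.trans_lt hy) (sub_pos.2 hy)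
  refine ENNReal.eq_top_of_forall_nnreal_le fun r ↦ ?_
  obtain ⟨k, hk, hkr⟩ : ∃ k : ℝ, 0 ≤ k ∧ k * (‖y‖ * (‖y‖ - K)) = r :=
    ⟨r / (‖y‖ * (‖y‖ - K)), by positivity, div_mul_cancel₀ _ hpos.ne'⟩
  have hle : (r : ℝ) ≤ ⟪y, k • y⟫ - Λ (k • y) := calc
    (r : ℝ) = ⟪y, k • y⟫ - K * ‖k • y‖ := by
      rw [← hkr, real_inner_smul_right, real_inner_self_eq_norm_sq, norm_smul,
        Real.norm_of_nonneg hk]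
      ring
    _ ≤ ⟪y, k • y⟫ - Λ (k • y) := by gcongr; exact hΛ _
  calc (r : ℝ≥0∞) = ENNReal.ofReal r := ENNReal.ofReal_coe_nnreal.symm
    _ ≤ ENNReal.ofReal (⟪y, k • y⟫ - Λ (k • y)) := ENNReal.ofReal_le_ofReal hle
    _ ≤ legendreTransform Λ y := ofReal_inner_sub_le_legendreTransform Λ y (k • y)

end Legendre

section Paths

variable {V : Type*} [NormedAddCommGroup V] [NormedSpace ℝ V]

/-- The counterpart of `Represents` for paths in an arbitrary normed space: `φ` is absolutely
continuous with derivative `g`. -/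
def HasIntegralDeriv (φ : C(I01, V)) (g : ℝ → V) : Prop :=
  IntegrableOn g I01 volume ∧ ∀ t : I01, φ t = φ pt0 + ∫ s in (0 : ℝ)..t, g s

/-- The action `∫₀¹ L(φ'(t)) dt` of an absolutely continuous path `φ` started in `F`, and `∞` for
every other path; the infimum is over the versions of `φ'`, as in `rateFun`. -/
def pathAction (L : V → ℝ≥0∞) (F : Set V) (φ : C(I01, V)) : ℝ≥0∞ :=
  ⨅ (g : ℝ → V) (_ : HasIntegralDeriv φ g ∧ φ pt0 ∈ F), ∫⁻ t in I01, L (g t)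

/-- The difference quotient `h⁻¹ (φ(t + h) - φ(t))`, where `φ` is extended to `ℝ` by constants. -/
def diffQuotient (h : ℝ) (φ : C(I01, V)) (t : ℝ) : V :=
  h⁻¹ • (φ.IccExtend zero_le_one (t + h) - φ.IccExtend zero_le_one t)

/-- The action of `φ` with `φ'` replaced by the difference quotient of step `h`. The integral is
over `[0, 1 - h]`, where the quotient does not see the extension of `φ` beyond `[0, 1]`. -/
def incrementAction (L : V → ℝ≥0∞) (h : ℝ) (φ : C(I01, V)) : ℝ≥0∞ :=
  ∫⁻ t in Icc 0 (1 - h), L (diffQuotient h φ t)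

variable {L : V → ℝ≥0∞} {φ : C(I01, V)} {g : ℝ → V} {h : ℝ} {K : ℝ≥0} {c : ℝ≥0∞}

lemma continuous_diffQuotient (h : ℝ) (φ : C(I01, V)) : Continuous (diffQuotient h φ) := by
  unfold diffQuotient
  fun_prop

lemma continuous_diffQuotient_apply (h t : ℝ) :
    Continuous fun φ : C(I01, V) ↦ diffQuotient h φ t := by
  simp only [diffQuotient, ContinuousMap.coe_IccExtend, IccExtend, Function.comp_apply]
  fun_prop

lemma measurable_comp_diffQuotient (hL : LowerSemicontinuous L) (h : ℝ) (φ : C(I01, V)) :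
    Measurable fun t ↦ L (diffQuotient h φ t) :=
  (hL.comp (continuous_diffQuotient h φ)).measurable

lemma lowerSemicontinuous_incrementAction (hL : LowerSemicontinuous L) (h : ℝ) :
    LowerSemicontinuous (incrementAction L h) :=
  lowerSemicontinuous_lintegral (measurable_comp_diffQuotient hL h) fun t ↦
    hL.comp (continuous_diffQuotient_apply h t)

lemma isClosed_setOf_forall_incrementAction_le (hL : LowerSemicontinuous L) (c : ℝ≥0∞) :
    IsClosed {φ | ∀ h > 0, incrementAction L h φ ≤ c} := by
  simp only [ofPred_forall]
  exact isClosed_biInter fun h _ ↦ (lowerSemicontinuous_incrementAction hL h).isClosed_preimage c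

lemma le_liminf_comp_diffQuotient (hL : LowerSemicontinuous L) {t : ℝ}
    (hφ : DifferentiableAt ℝ (φ.IccExtend zero_le_one) t) :
    L (deriv (φ.IccExtend zero_le_one) t) ≤ liminf (fun h ↦ L (diffQuotient h φ t)) (𝓝[>] 0) :=
  (hL.le_liminf _).trans hφ.hasDerivAt.tendsto_slope_zero_right.liminf_le_liminf_comp

namespace HasIntegralDeriv

lemma aemeasurable_comp (hg : HasIntegralDeriv φ g) (hL : LowerSemicontinuous L) :
    AEMeasurable (fun t ↦ L (g t)) (volume.restrict I01) := by
  borelize V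
  exact hL.measurable.comp_aemeasurable hg.1.aemeasurable

lemma sub_eq_integral (hg : HasIntegralDeriv φ g) (s t : I01) :
    φ t - φ s = ∫ r in (s : ℝ)..t, g r := by
  have hint (u v : I01) : IntervalIntegrable g volume u v :=
    (hg.1.mono_set (uIcc_subset_Icc u.2 v.2)).intervalIntegrable
  rw [hg.2 t, hg.2 s, add_sub_add_left_eq_sub]
  exact intervalIntegral.integral_interval_sub_left (hint pt0 t) (hint pt0 s)

lemma lipschitzWith (hg : HasIntegralDeriv φ g) (hK : ∀ᵐ t ∂volume.restrict I01, ‖g t‖ ≤ K) :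
    LipschitzWith K φ := by
  refine LipschitzWith.of_dist_le_mul fun s t ↦ ?_
  rw [dist_comm, dist_eq_norm, hg.sub_eq_integral, dist_comm s t, Subtype.dist_eq, Real.dist_eq]
  refine intervalIntegral.norm_integral_le_of_norm_le_const_ae ?_
  filter_upwards [(ae_restrict_iff' measurableSet_Icc).1 hK] with r hr hmem
  exact hr (uIcc_subset_Icc s.2 t.2 (uIoc_subset_uIcc hmem))

lemma diffQuotient_eq_average (hg : HasIntegralDeriv φ g) (hh : 0 < h) {t : ℝ}
    (ht : t ∈ Icc 0 (1 - h)) : diffQuotient h φ t = ⨍ s in Ioc t (t + h), g s := by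
  have ht₀ : t ∈ I01 := ⟨ht.1, by linarith [ht.2]⟩
  have ht₁ : t + h ∈ I01 := ⟨by linarith [ht.1], by linarith [ht.2]⟩
  rw [diffQuotient, ContinuousMap.coe_IccExtend, IccExtend_of_mem _ _ ht₀,
    IccExtend_of_mem _ _ ht₁, hg.sub_eq_integral, ← uIoc_of_le (le_add_of_nonneg_right hh.le),
    interval_average_eq, add_sub_cancel_left]

end HasIntegralDeriv

variable [FiniteDimensional ℝ V]

lemma hasIntegralDeriv_deriv (hφ : LipschitzWith K φ) :
    HasIntegralDeriv φ (deriv (φ.IccExtend zero_le_one)) := by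
  have hlip : LipschitzWith K (φ.IccExtend zero_le_one) := lipschitzWith_iccExtend zero_le_one hφ
  refine ⟨(locallyIntegrable_deriv_of_lipschitzWith hlip).integrableOn_isCompact isCompact_Icc,
    fun t ↦ ?_⟩
  rw [integral_deriv_of_lipschitzWith hlip, ContinuousMap.coe_IccExtend,
    IccExtend_of_mem _ _ t.2, IccExtend_of_mem _ _ (x := 0) pt0.2]
  exact (add_sub_cancel _ _).symm

lemma lintegral_comp_deriv_le_of_incrementAction_le (hL : LowerSemicontinuous L)
    (hφ : LipschitzWith K φ) (hc : ∀ h > 0, incrementAction L h φ ≤ c) :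
    ∫⁻ t in I01, L (deriv (φ.IccExtend zero_le_one) t) ≤ c := by
  set f : ℝ → ℝ → ℝ≥0∞ := fun h ↦ (Icc 0 (1 - h)).indicator fun t ↦ L (diffQuotient h φ t) with hf
  have hmeas (h : ℝ) : Measurable (f h) :=
    (measurable_comp_diffQuotient hL h φ).indicator measurableSet_Icc
  have hlim : ∀ᵐ t ∂volume.restrict I01,
      L (deriv (φ.IccExtend zero_le_one) t) ≤ liminf (fun h ↦ f h t) (𝓝[>] 0) := by
    filter_upwards [ae_restrict_mem measurableSet_Icc,
      ae_restrict_of_ae (lipschitzWith_iccExtend zero_le_one hφ).ae_differentiableAt_real,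
      ae_restrict_of_ae (Measure.ae_ne volume (1 : ℝ))] with t ht hdiff ht1
    refine (le_liminf_comp_diffQuotient hL hdiff).trans_eq (liminf_congr ?_)
    filter_upwards [nhdsWithin_le_nhds (Iio_mem_nhds (sub_pos.2 (ht.2.lt_of_ne ht1)))] with h hh
    have hmem : t ∈ Icc 0 (1 - h) := ⟨ht.1, by linarith [mem_Iio.1 hh]⟩
    simp only [hf, indicator_of_mem hmem]
  calc ∫⁻ t in I01, L (deriv (φ.IccExtend zero_le_one) t)
      ≤ ∫⁻ t in I01, liminf (fun h ↦ f h t) (𝓝[>] 0) := lintegral_mono_ae hlim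
    _ ≤ liminf (fun h ↦ ∫⁻ t in I01, f h t) (𝓝[>] 0) := lintegral_liminf_le hmeas
    _ ≤ c := by
      refine liminf_le_of_frequently_le' (Eventually.frequently ?_)
      filter_upwards [self_mem_nhdsWithin] with h hh
      calc ∫⁻ t in I01, f h t ≤ ∫⁻ t, f h t := setLIntegral_le_lintegral _ _
        _ = incrementAction L h φ := lintegral_indicator measurableSet_Icc _
        _ ≤ c := hc h hh

end Paths

section Action

variable {V : Type*} [NormedAddCommGroup V] [InnerProductSpace ℝ V]
  {Λ : V → ℝ} {F : Set V} {φ : C(I01, V)} {g : ℝ → V} {h : ℝ} {K : ℝ≥0} {c : ℝ≥0∞}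

lemma HasIntegralDeriv.legendreTransform_diffQuotient_le [CompleteSpace V]
    (hg : HasIntegralDeriv φ g) (Λ : V → ℝ) (hh : 0 < h) {t : ℝ} (ht : t ∈ Icc 0 (1 - h)) :
    legendreTransform Λ (diffQuotient h φ t) ≤ (ENNReal.ofReal h)⁻¹ *
      ∫⁻ s in Ioc t (t + h), I01.indicator (fun r ↦ legendreTransform Λ (g r)) s := by
  have hsub : Ioc t (t + h) ⊆ I01 := fun s hs ↦
    ⟨ht.1.trans hs.1.le, by linarith [hs.2, ht.2]⟩
  have : NeZero (volume.restrict (Ioc t (t + h))) :=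
    ⟨Measure.restrict_eq_zero.not.2 (by simpa using hh)⟩
  calc legendreTransform Λ (diffQuotient h φ t)
      = legendreTransform Λ (⨍ s in Ioc t (t + h), g s) := by rw [hg.diffQuotient_eq_average hh ht]
    _ ≤ ⨍⁻ s in Ioc t (t + h), legendreTransform Λ (g s) ∂volume :=
        legendreTransform_average_le Λ (hg.1.mono_set hsub)
    _ = (ENNReal.ofReal h)⁻¹ * ∫⁻ s in Ioc t (t + h), legendreTransform Λ (g s) := by
        rw [setLAverage_eq, Real.volume_Ioc, add_sub_cancel_left, ENNReal.div_eq_inv_mul]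
    _ = _ := by
        congr 1
        exact setLIntegral_congr_fun measurableSet_Ioc fun s hs ↦
          (indicator_of_mem (hsub hs) fun r ↦ legendreTransform Λ (g r)).symm

lemma HasIntegralDeriv.incrementAction_le [CompleteSpace V] (hg : HasIntegralDeriv φ g)
    (Λ : V → ℝ) (hh : 0 < h) :
    incrementAction (legendreTransform Λ) h φ ≤ ∫⁻ t in I01, legendreTransform Λ (g t) := by
  set G : ℝ → ℝ≥0∞ := I01.indicator fun t ↦ legendreTransform Λ (g t)
  have hG : AEMeasurable G := (aemeasurable_indicator_iff measurableSet_Icc).2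
    (hg.aemeasurable_comp (lowerSemicontinuous_legendreTransform Λ))
  calc incrementAction (legendreTransform Λ) h φ
      ≤ ∫⁻ t in Icc 0 (1 - h), (ENNReal.ofReal h)⁻¹ * ∫⁻ s in Ioc t (t + h), G s :=
        setLIntegral_mono' measurableSet_Icc fun t ht ↦
          hg.legendreTransform_diffQuotient_le Λ hh ht
    _ ≤ ∫⁻ t, (ENNReal.ofReal h)⁻¹ * ∫⁻ s in Ioc t (t + h), G s := setLIntegral_le_lintegral _ _
    _ = (ENNReal.ofReal h)⁻¹ * (ENNReal.ofReal h * ∫⁻ s, G s) := by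
        rw [lintegral_const_mul' _ _ (by simpa using hh), lintegral_setLIntegral_Ioc_add hG]
    _ = ∫⁻ s, G s := ENNReal.inv_mul_cancel_left (by simpa using hh) ENNReal.ofReal_ne_top
    _ = ∫⁻ t in I01, legendreTransform Λ (g t) := lintegral_indicator measurableSet_Icc _

lemma incrementAction_le_pathAction [CompleteSpace V] (Λ : V → ℝ) (F : Set V) (hh : 0 < h)
    (φ : C(I01, V)) :
    incrementAction (legendreTransform Λ) h φ ≤ pathAction (legendreTransform Λ) F φ :=
  le_iInf₂ fun _ hg ↦ hg.1.incrementAction_le Λ hh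

lemma mem_and_lipschitzWith_of_pathAction_ne_top (hΛ : ∀ η, Λ η ≤ K * ‖η‖)
    (hφ : pathAction (legendreTransform Λ) F φ ≠ ∞) : φ pt0 ∈ F ∧ LipschitzWith K φ := by
  obtain ⟨g, ⟨hg, h0⟩, hfin⟩ : ∃ g, (HasIntegralDeriv φ g ∧ φ pt0 ∈ F) ∧
      ∫⁻ t in I01, legendreTransform Λ (g t) < ∞ := by
    simpa only [pathAction, iInf_lt_iff, exists_prop] using hφ.lt_top
  have hlt : ∀ᵐ t ∂volume.restrict I01, legendreTransform Λ (g t) < ∞ :=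
    ae_lt_top' (hg.aemeasurable_comp (lowerSemicontinuous_legendreTransform Λ)) hfin.ne
  refine ⟨h0, hg.lipschitzWith (hlt.mono fun t ht ↦ ?_)⟩
  exact le_of_not_gt fun hK ↦ ht.ne (legendreTransform_eq_top_of_lt_norm hΛ hK)

variable [FiniteDimensional ℝ V]

lemma pathAction_le_iff (hΛ : ∀ η, Λ η ≤ K * ‖η‖) (hc : c ≠ ∞) :
    pathAction (legendreTransform Λ) F φ ≤ c ↔
      (φ pt0 ∈ F ∧ LipschitzWith K φ) ∧
        ∀ h > 0, incrementAction (legendreTransform Λ) h φ ≤ c := by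
  have : CompleteSpace V := FiniteDimensional.complete ℝ V
  constructor
  · exact fun hφ ↦ ⟨mem_and_lipschitzWith_of_pathAction_ne_top hΛ (ne_top_of_le_ne_top hc hφ),
      fun h hh ↦ (incrementAction_le_pathAction Λ F hh φ).trans hφ⟩
  · rintro ⟨⟨h0, hlip⟩, hincr⟩
    exact (iInf₂_le _ ⟨hasIntegralDeriv_deriv hlip, h0⟩).trans
      (lintegral_comp_deriv_le_of_incrementAction_le
        (lowerSemicontinuous_legendreTransform Λ) hlip hincr)

lemma setOf_pathAction_le_eq (hΛ : ∀ η, Λ η ≤ K * ‖η‖) (F : Set V) (hc : c ≠ ∞) :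
    {φ | pathAction (legendreTransform Λ) F φ ≤ c} =
      {φ : C(I01, V) | φ pt0 ∈ F ∧ LipschitzWith K φ} ∩
        {φ | ∀ h > 0, incrementAction (legendreTransform Λ) h φ ≤ c} :=
  Set.ext fun _ ↦ pathAction_le_iff hΛ hc

theorem lowerSemicontinuous_pathAction (hΛ : ∀ η, Λ η ≤ K * ‖η‖) (hF : IsClosed F) :
    LowerSemicontinuous (pathAction (legendreTransform Λ) F) := by
  refine lowerSemicontinuous_iff_isClosed_preimage.2 fun c ↦ ?_
  rcases eq_or_ne c ∞ with rfl | hc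
  · simp only [Iic_top, preimage_univ, isClosed_univ]
  · change IsClosed {φ | pathAction (legendreTransform Λ) F φ ≤ c}
    rw [setOf_pathAction_le_eq hΛ F hc]
    exact ((hF.preimage (continuous_eval_const pt0)).inter
      (isClosed_setOf_continuousMap_lipschitzWith K)).inter
        (isClosed_setOf_forall_incrementAction_le (lowerSemicontinuous_legendreTransform Λ) c)

theorem isCompact_setOf_pathAction_le (hΛ : ∀ η, Λ η ≤ K * ‖η‖) (hF : IsCompact F) (hc : c ≠ ∞) :
    IsCompact {φ | pathAction (legendreTransform Λ) F φ ≤ c} := by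
  rw [setOf_pathAction_le_eq hΛ F hc]
  exact (isCompact_setOf_lipschitzWith K pt0 hF).inter_right
    (isClosed_setOf_forall_incrementAction_le (lowerSemicontinuous_legendreTransform Λ) c)

end Action

theorem statement8_general {V : Type*} [NormedAddCommGroup V] [InnerProductSpace ℝ V]
    [FiniteDimensional ℝ V] {Λ : V → ℝ} {K : ℝ≥0} (hΛ : ∀ η, Λ η ≤ K * ‖η‖) {F : Set V}
    (hF : IsClosed F) :
    LowerSemicontinuous (pathAction (legendreTransform Λ) F) ∧ (Bornology.IsBounded F →
      ∀ c ≠ ∞, IsCompact {φ | pathAction (legendreTransform Λ) F φ ≤ c}) :=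
  ⟨lowerSemicontinuous_pathAction hΛ hF, fun hbdd _ hc ↦
    isCompact_setOf_pathAction_le hΛ (Metric.isCompact_of_isClosed_isBounded hF hbdd) hc⟩

/-- The rate function `I_E` is a good rate function on `C([0,1],ℝ²)` with the
sup metric: it is lower semicontinuous and its sublevel sets are compact. -/
theorem statement8 (R : ℝ) (hR : 0 < R) (E : Set E2) (hE : Bornology.IsBounded E) :
    LowerSemicontinuous (rateFun R E) ∧
    ∀ α : ℝ, 0 ≤ α → IsCompact {φ : PathSp | rateFun R E φ ≤ ENNReal.ofReal α} := by
  have hgood := statement8_general (K := ⟨R, hR.le⟩) (logMGF_le hR) (isClosed_closure (s := E))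
  exact ⟨hgood.1, fun _ _ ↦ hgood.2 hE.closure _ ENNReal.ofReal_ne_top⟩
end
end
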